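/- Let H⁽²⁾ be the Hessian of the doubled system, i.e. of the periodic linear discrete Lagrangian system of period 2n defined by the same matrices (A_i), (B_i) regarded as 2n-periodic. Then ind(H⁽²⁾) = ind(H) + ind(H_{−1}). Consequently, if H_{−1} is invertible and σ · (−1)^{ind(H⁽²⁾) − ind(H)} < 0, where σ = sign(∏_{i=1}^n det B_i), then the monodromy matrix P has a real eigenvalue ρ < −1 (the periodic trajectory is exponentially unstable). -/

import Mathlib

open Matrix BigOperators

/-- The transfer matrix `T_i` of a periodic linear discrete Lagrangian system. -/
noncomputable def transferMatrix (m : ℕ) (A B : ℤ → Matrix (Fin m) (Fin m) ℝ) (i : ℤ) :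
    Matrix (Fin m ⊕ Fin m) (Fin m ⊕ Fin m) ℝ :=
  Matrix.fromBlocks 0 1 (-(((B i)ᵀ)⁻¹ * B (i - 1))) (((B i)ᵀ)⁻¹ * A i)

/-- The monodromy matrix `P = T_n ⋯ T_1`. -/
noncomputable def monodromy (m n : ℕ) (A B : ℤ → Matrix (Fin m) (Fin m) ℝ) :
    Matrix (Fin m ⊕ Fin m) (Fin m ⊕ Fin m) ℝ :=
  (List.range n).foldl (fun M i => transferMatrix m A B ((i : ℤ) + 1) * M) 1

/-- The Hessian of a system of period `N` (cyclic conventions). -/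
noncomputable def hessian (m N : ℕ) [NeZero N] (A B : ℤ → Matrix (Fin m) (Fin m) ℝ) :
    Matrix (Fin N × Fin m) (Fin N × Fin m) ℝ :=
  fun p q =>
    (if q.1 = p.1 then A ((p.1 : ℕ) : ℤ) p.2 q.2 else 0)
    + (if q.1 = p.1 - 1 then -(B (((p.1 : ℕ) : ℤ) - 1) p.2 q.2) else 0)
    + (if q.1 = p.1 + 1 then -(B ((p.1 : ℕ) : ℤ) q.2 p.2) else 0)

/-- The `ρ`-Hessian at `ρ = -1` (antiperiodic conventions). -/
noncomputable def hessianNeg (m n : ℕ) [NeZero n] (A B : ℤ → Matrix (Fin m) (Fin m) ℝ) :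
    Matrix (Fin n × Fin m) (Fin n × Fin m) ℝ :=
  fun p q =>
    (if q.1 = p.1 then A ((p.1 : ℕ) : ℤ) p.2 q.2 else 0)
    + (if q.1 = p.1 - 1 then
        -((if (p.1 : ℕ) = 0 then (-1 : ℝ) else 1) * B (((p.1 : ℕ) : ℤ) - 1) p.2 q.2) else 0)
    + (if q.1 = p.1 + 1 then
        -((if (p.1 : ℕ) = n - 1 then (-1 : ℝ) else 1) * B ((p.1 : ℕ) : ℤ) q.2 p.2) else 0)

/-- The (Morse) index of a real symmetric matrix: the number of its negative
eigenvalues counted with multiplicity. -/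
noncomputable def matIndex {N : Type*} [Fintype N] (Q : Matrix N N ℝ) : ℕ :=
  sSup {d : ℕ | ∃ W : Submodule ℝ (N → ℝ), Module.finrank ℝ W = d ∧
    ∀ x ∈ W, x ≠ 0 → x ⬝ᵥ Q *ᵥ x < 0}

noncomputable def bd {n : ℕ} {k : Type*} (M : Fin n → Matrix k k ℝ) : Matrix (Fin n × k) (Fin n × k) ℝ :=
  fun p q => if q.1 = p.1 then M p.1 p.2 q.2 else 0

noncomputable def sg {n : ℕ} [NeZero n] (c : ℝ) (i : Fin n) : ℝ := if (i : ℕ) = 0 then c else 1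

noncomputable def Zm (n : ℕ) [NeZero n] (k : Type*) [DecidableEq k] (c : ℝ) : Matrix (Fin n × k) (Fin n × k) ℝ :=
  fun p q => if q = (p.1 - 1, p.2) then sg c p.1 else 0

lemma Zm_mul {n : ℕ} [NeZero n] {k : Type*} [DecidableEq k] [Fintype k] {l : Type*} (c : ℝ)
    (M : Matrix (Fin n × k) l ℝ) (p) (q) :
    (Zm n k c * M) p q = sg c p.1 * M (p.1 - 1, p.2) q := by
  simp [Matrix.mul_apply, Zm]

lemma bd_mul_apply {n : ℕ} {k : Type*} [Fintype k] {l : Type*} (M : Fin n → Matrix k k ℝ)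
    (X : Matrix (Fin n × k) l ℝ) (p) (q) :
    (bd M * X) p q = ∑ b, M p.1 p.2 b * X (p.1, b) q := by
  simp [Matrix.mul_apply, bd, Fintype.sum_prod_type]

lemma bd_mul {n : ℕ} {k : Type*} [Fintype k] (M M' : Fin n → Matrix k k ℝ) :
    bd M * bd M' = bd (fun i => M i * M' i) := by
  ext p q
  rw [bd_mul_apply]
  by_cases h : q.1 = p.1 <;> simp [bd, h, Matrix.mul_apply]

lemma bd_one {n : ℕ} {k : Type*} [DecidableEq k] :
    bd (fun _ : Fin n => (1 : Matrix k k ℝ)) = 1 := by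
  ext p q
  rcases p with ⟨i, a⟩
  rcases q with ⟨j, b⟩
  by_cases h : j = i
  · simp [bd, h, Matrix.one_apply]
  · simp [bd, h, Matrix.one_apply, Ne.symm h]

lemma det_bd {n : ℕ} {k : Type*} [DecidableEq k] [Fintype k] (M : Fin n → Matrix k k ℝ) :
    (bd M).det = ∏ i, (M i).det := by
  rw [← Matrix.det_blockDiagonal, ← Matrix.det_submatrix_equiv_self (Equiv.prodComm (Fin n) k)]
  congr 1
  ext p q
  simp [bd, Matrix.blockDiagonal_apply, eq_comm (a := q.1)]

lemma Fin_sub_one_val {n : ℕ} [NeZero n] (i : Fin n) :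
    ((i - 1 : Fin n) : ℕ) = if (i : ℕ) = 0 then n - 1 else (i : ℕ) - 1 := by
  obtain ⟨n, rfl⟩ : ∃ k, n = k + 1 := ⟨n - 1, by have := NeZero.ne n; omega⟩
  rw [Fin.coe_sub_one]
  by_cases h : i = 0
  · simp [h]
  · have : (i : ℕ) ≠ 0 := fun h' => h (Fin.ext (by simpa using h'))
    rw [if_neg h, if_neg this]

lemma Fin_add_one_val {n : ℕ} [NeZero n] (i : Fin n) :
    ((i + 1 : Fin n) : ℕ) = if (i : ℕ) = n - 1 then 0 else (i : ℕ) + 1 := by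
  obtain ⟨n, rfl⟩ : ∃ k, n = k + 1 := ⟨n - 1, by have := NeZero.ne n; omega⟩
  have := Fin.val_add_one i
  simp only [Fin.ext_iff, Fin.val_last] at this
  simpa using this

lemma det_Zm {n : ℕ} [NeZero n] (m : ℕ) :
    (Zm n (Fin m) (-1)).det = (-1) ^ (n * m) := by
  have h : Zm n (Fin m) (-1) = Matrix.of fun p q : Fin n × Fin m =>
      sg (-1) p.1 * ((1 : Matrix (Fin n × Fin m) (Fin n × Fin m) ℝ).submatrix
        (Equiv.prodCongrLeft (fun _ : Fin m => (Equiv.subRight (1 : Fin n)))) id) p q := by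
    ext p q
    simp [Zm, Matrix.one_apply, eq_comm, Equiv.prodCongrLeft]
  rw [h, Matrix.det_mul_column, Matrix.det_permute, Equiv.Perm.sign_prodCongrLeft]
  have h1 : Equiv.Perm.sign (Equiv.subRight (1 : Fin n)) = (-1) ^ (n - 1) := by
    obtain ⟨k, rfl⟩ : ∃ k, n = k + 1 := ⟨n - 1, by have := NeZero.ne n; omega⟩
    rw [show Equiv.subRight (1 : Fin (k+1)) = (finRotate (k+1))⁻¹ by
      ext i; rw [eq_comm]; congr 1; rw [Equiv.Perm.inv_eq_iff_eq]; simp]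
    simp
  have h2 : ∏ i : Fin n, (sg (-1) i) = -1 := by
    rw [Finset.prod_eq_single (0 : Fin n)]
    · simp [sg]
    · intro b _ hb
      have : (b : ℕ) ≠ 0 := fun h => hb (Fin.ext (by simpa using h))
      simp [sg, this]
    · simp
  simp [h1, Fintype.prod_prod_type, Finset.prod_pow, h2]
  rw [← pow_mul, ← pow_add]
  obtain ⟨k, rfl⟩ : ∃ k, n = k + 1 := ⟨n - 1, by have := NeZero.ne n; omega⟩
  congr 1
  simp; ring

noncomputable def Phi {k : Type*} [DecidableEq k] [Fintype k] (T : ℕ → Matrix k k ℝ) : ℕ → Matrix k k ℝ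
  | 0 => 1
  | i + 1 => T i * Phi T i

lemma det_cyclic {n : ℕ} [NeZero n] {k : Type*} [DecidableEq k] [Fintype k] (c : ℝ)
    (T : ℕ → Matrix k k ℝ) :
    (1 - Zm n k c * bd (fun i : Fin n => T i)).det = (1 - c • Phi T n).det := by
  have hn : 0 < n := Nat.pos_of_ne_zero (NeZero.ne n)
  set L : Matrix (Fin n × k) (Fin n × k) ℝ := 1 - Zm n k 0 * bd (fun i : Fin n => T i) with hL
  let F : Matrix (Fin n × k) k ℝ := Matrix.of fun p b => Phi T p.1 p.2 b
  let E : Matrix k (Fin n × k) ℝ := Matrix.of fun a q => if (q.1 : ℕ) = n - 1 then c * T (n - 1) a q.2 else 0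
  have hLF : L * F = Matrix.of fun p b => if (p.1 : ℕ) = 0 then (1 : Matrix k k ℝ) p.2 b else 0 := by
    rw [hL, Matrix.sub_mul, Matrix.mul_assoc, Matrix.one_mul]
    ext ⟨i, a⟩ b
    rw [Matrix.sub_apply]
    have h1 : (Zm n k 0 * (bd (fun i : Fin n => T i) * F)) (i, a) b
        = sg 0 i * (T ((i - 1 : Fin n) : ℕ) * Phi T ((i - 1 : Fin n) : ℕ)) a b := by
      rw [Zm_mul, bd_mul_apply]
      simp [Matrix.mul_apply, F]
    rw [h1, Fin_sub_one_val]
    by_cases h : (i : ℕ) = 0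
    · simp only [sg, h, if_true, zero_mul, sub_zero, F, Matrix.of_apply, Phi]
    · obtain ⟨j, hj⟩ : ∃ j, (i : ℕ) = j + 1 := ⟨i - 1, by omega⟩
      simp only [sg, hj, F, Matrix.of_apply, Phi]
      simp
  have hN : 1 - Zm n k c * bd (fun i : Fin n => T i) = L * (1 - F * E) := by
    rw [Matrix.mul_sub, ← Matrix.mul_assoc, hLF, Matrix.mul_one, hL, sub_sub]
    congr 1
    ext ⟨i, a⟩ ⟨j, b⟩
    rw [Matrix.add_apply, Zm_mul, Zm_mul, Matrix.mul_apply]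
    simp only [bd, sg, E, Fin.ext_iff, Fin_sub_one_val, Matrix.of_apply]
    by_cases h : (i : ℕ) = 0
    · by_cases h' : (j : ℕ) = n - 1 <;> simp [h, h', Matrix.one_apply]
    · simp [h]
  have hdL : L.det = 1 := by
    have hb : L.BlockTriangular (fun p => OrderDual.toDual p.1) := by
      intro p q hpq
      have hpq' : p.1 < q.1 := hpq
      have h3 : p ≠ q := fun h => by simp [h] at hpq'
      rw [hL, Matrix.sub_apply, Zm_mul]
      simp only [bd, sg, Fin.ext_iff, Fin_sub_one_val, Matrix.one_apply, h3]
      have : (p.1 : ℕ) < q.1 := hpq'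
      by_cases h : (p.1 : ℕ) = 0
      · simp [h]
      · have h4 : ¬ ((q.1 : ℕ) = p.1 - 1) := by omega
        simp [h, h4]
    rw [hb.det_fintype]
    apply Finset.prod_eq_one
    intro i _
    have : L.toSquareBlock (fun p => OrderDual.toDual p.1) i = 1 := by
      ext ⟨p, hp⟩ ⟨q, hq⟩
      have hpq : (q.1 : ℕ) = p.1 := by 
        have : q.1 = p.1 := OrderDual.toDual_inj.mp (hq.trans hp.symm)
        rw [this]
      simp only [Matrix.toSquareBlock_def, Matrix.of_apply]
      rw [hL, Matrix.sub_apply, Zm_mul]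
      simp only [bd, sg, Fin.ext_iff, Fin_sub_one_val, Matrix.one_apply, Subtype.mk.injEq]
      by_cases h : (p.1 : ℕ) = 0
      · simp [h]
      · have h4 : ¬ ((q.1 : ℕ) = p.1 - 1) := by omega
        simp [h, h4]
    rw [this, Matrix.det_one]
  rw [hN, Matrix.det_mul, hdL, one_mul, Matrix.det_one_sub_mul_comm]
  congr 2
  ext a b
  obtain ⟨k, rfl⟩ : ∃ k, n = k + 1 := ⟨n - 1, by omega⟩
  simp only [Matrix.mul_apply, E, F, Matrix.of_apply, Fintype.sum_prod_type, Matrix.smul_apply, Phi, smul_eq_mul]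
  rw [Finset.sum_eq_single (Fin.last k)]
  · simp [Finset.mul_sum, mul_assoc]
  · intro x _ hx
    have : (x : ℕ) ≠ k := fun h => hx (Fin.ext (by simpa using h))
    simp [this]
  · simp

lemma hessNeg_eq (m n : ℕ) [NeZero n] (A B : ℤ → Matrix (Fin m) (Fin m) ℝ) :
    hessianNeg m n A B = bd (fun i : Fin n => A ((i : ℕ) : ℤ))
      - bd (fun i : Fin n => B (((i : ℕ) : ℤ) - 1)) * Zm n (Fin m) (-1)
      - bd (fun i : Fin n => (B ((i : ℕ) : ℤ))ᵀ) * (Zm n (Fin m) (-1))ᵀ := by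
  ext ⟨i, a⟩ ⟨j, b⟩
  rw [Matrix.sub_apply, Matrix.sub_apply, bd_mul_apply, bd_mul_apply]
  have e : (i = j - 1) = (j = i + 1) := by rw [eq_sub_iff_add_eq, eq_comm (a := j)]
  simp only [hessianNeg, bd, Zm, sg, Matrix.transpose_apply, Prod.mk.injEq, e]
  have h2 : (j = i + 1) → ((j : ℕ) = 0 ↔ (i : ℕ) = n - 1) := by
    rintro rfl
    rw [Fin_add_one_val]
    split_ifs with h <;> simp [h]
  have s1 : ∑ x, B (((i : ℕ) : ℤ) - 1) a x * (if j = i - 1 ∧ b = x then (if (i : ℕ) = 0 then (-1 : ℝ) else 1) else 0)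
      = if j = i - 1 then (if (i : ℕ) = 0 then (-1 : ℝ) else 1) * B (((i : ℕ) : ℤ) - 1) a b else 0 := by
    by_cases h : j = i - 1
    · simp only [h, true_and, mul_ite, mul_zero, Finset.sum_ite_eq, Finset.mem_univ, if_true]
      split_ifs <;> ring
    · simp [h]
  have s2 : ∑ x, B ((i : ℕ) : ℤ) x a * (if j = i + 1 ∧ x = b then (if (j : ℕ) = 0 then (-1 : ℝ) else 1) else 0)
      = if j = i + 1 then (if (i : ℕ) = n - 1 then (-1 : ℝ) else 1) * B ((i : ℕ) : ℤ) b a else 0 := by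
    by_cases h : j = i + 1
    · simp only [h2 h]
      simp only [h, true_and, mul_ite, mul_zero, Finset.sum_ite_eq', Finset.mem_univ, if_true]
      split_ifs <;> ring
    · simp [h]
  rw [s1, s2]
  split_ifs <;> ring

lemma Zm_mul_transpose (n m : ℕ) [NeZero n] :
    Zm n (Fin m) (-1) * (Zm n (Fin m) (-1))ᵀ = 1 := by
  ext ⟨i, a⟩ ⟨j, b⟩
  rw [Zm_mul]
  simp only [Matrix.transpose_apply, Zm, Prod.mk.injEq, sub_left_inj, sg, Matrix.one_apply]
  by_cases h : i = j
  · subst h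
    by_cases h' : a = b <;> simp [h']
    split_ifs <;> norm_num
  · simp [h]

lemma Phi_eq_foldl {k : Type*} [DecidableEq k] [Fintype k] (T : ℕ → Matrix k k ℝ) (n : ℕ) :
    Phi T (n + 1) = (List.range n).foldl (fun M i => T (i + 1) * M) 1 * T 0 := by
  induction n with
  | zero => simp [Phi]
  | succ n ih =>
    rw [Phi, ih, List.range_succ, List.foldl_append]
    simp [Matrix.mul_assoc]

lemma monodromy_eq (m n : ℕ) (A B : ℤ → Matrix (Fin m) (Fin m) ℝ) :
    monodromy m n A B =
      (List.range n).foldl (fun M (i : ℕ) => transferMatrix m A B ((i : ℤ) + 1) * M) 1 := by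
  have h : ∀ l : List ℕ, List.flatMap (fun a : ℕ => [(a : ℤ)]) l = l.map (fun a : ℕ => (a : ℤ)) := by
    intro l
    induction l with
    | nil => rfl
    | cons a l ih => simpa using ih
  simp only [monodromy, List.bind_eq_flatMap, List.pure_def, h, List.foldl_map]

lemma det_one_add_monodromy (m n : ℕ) [NeZero n] (A B : ℤ → Matrix (Fin m) (Fin m) ℝ)
    (hAper : ∀ i, A (i + n) = A i) (hBper : ∀ i, B (i + n) = B i) :
    (1 + monodromy m n A B).det
      = (1 - (-1 : ℝ) • Phi (fun i : ℕ => transferMatrix m A B i) n).det := by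
  obtain ⟨k, rfl⟩ : ∃ k, n = k + 1 := ⟨n - 1, by have := NeZero.ne n; omega⟩
  rw [Phi_eq_foldl, monodromy_eq, List.range_succ, List.foldl_append]
  have : transferMatrix m A B ((k : ℤ) + 1) = transferMatrix m A B 0 := by
    have h1 := hAper 0
    have h2 := hBper 0
    have h3 := hBper (-1)
    simp only [Nat.cast_add, Nat.cast_one, zero_add] at h1 h2 h3
    rw [transferMatrix, transferMatrix, h1, h2, zero_sub, ← h3]
    rw [show (-1 : ℤ) + (↑k + 1) = ↑k + 1 - 1 by ring]
  simp only [List.foldl_cons, List.foldl_nil, this, Nat.cast_add, Nat.cast_one, Nat.cast_zero]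
  rw [Matrix.det_one_add_mul_comm]
  simp

lemma det_hessNeg (m n : ℕ) [NeZero n] (A B : ℤ → Matrix (Fin m) (Fin m) ℝ)
    (hAper : ∀ i, A (i + n) = A i) (hBper : ∀ i, B (i + n) = B i)
    (hBinv : ∀ i, IsUnit (B i).det) :
    (hessianNeg m n A B).det =
      (∏ i : Fin n, (B ((i : ℕ) : ℤ)).det) * (1 + monodromy m n A B).det := by
  set Z := Zm n (Fin m) (-1) with hZ
  set G := bd (fun i : Fin n => ((B ((i : ℕ) : ℤ))ᵀ)⁻¹) with hG
  set AA := bd (fun i : Fin n => A ((i : ℕ) : ℤ)) with hAA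
  set Bm := bd (fun i : Fin n => B (((i : ℕ) : ℤ) - 1)) with hBm
  set Bt := bd (fun i : Fin n => (B ((i : ℕ) : ℤ))ᵀ) with hBt
  have hBT : ∀ i, IsUnit ((B i)ᵀ).det := fun i => by rw [Matrix.det_transpose]; exact hBinv i
  have hGB : G * Bt = 1 := by
    rw [hG, hBt, bd_mul, ← bd_one]
    congr 1
    ext1 i
    exact Matrix.nonsing_inv_mul _ (hBT _)
  have key : Z * G * (-(hessianNeg m n A B)) = 1 - Z * (G * AA) - (Z * (G * Bm)) * (-Z) := by
    rw [hessNeg_eq]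
    have : Z * G * (Bt * Zᵀ) = 1 := by
      rw [← Matrix.mul_assoc, Matrix.mul_assoc Z, hGB, Matrix.mul_one, hZ, Zm_mul_transpose]
    rw [neg_sub, ← hAA, ← hBm, ← hBt, ← hZ, Matrix.mul_sub, this, Matrix.mul_sub]
    simp only [Matrix.mul_assoc, Matrix.mul_neg]
    abel
  have hblock : (1 - Zm n (Fin m ⊕ Fin m) (-1) * bd (fun i : Fin n => transferMatrix m A B ((i : ℕ) : ℤ))).det
      = (Matrix.fromBlocks 1 (-Z) (Z * (G * Bm)) (1 - Z * (G * AA))).det := by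
    rw [← Matrix.det_submatrix_equiv_self (Equiv.prodSumDistrib (Fin n) (Fin m) (Fin m)) (Matrix.fromBlocks _ _ _ _)]
    congr 1
    rw [hG, hBm, hAA, bd_mul, bd_mul]
    ext ⟨i, a | a⟩ ⟨j, b | b⟩
    · rw [Matrix.sub_apply, Zm_mul]
      simp [bd, transferMatrix, Matrix.one_apply]
    · rw [Matrix.sub_apply, Zm_mul]
      simp [bd, transferMatrix, Matrix.one_apply, hZ, Zm]
      by_cases h : j = i - 1 <;> simp [h, eq_comm]
    · rw [Matrix.sub_apply, Zm_mul]
      simp [bd, transferMatrix, Matrix.one_apply, hZ, Zm_mul]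
      by_cases h : j = i - 1 <;> simp [h]
    · rw [Matrix.sub_apply, Zm_mul]
      simp [bd, transferMatrix, Matrix.one_apply, hZ, Zm_mul]
  have h1 := det_cyclic (n := n) (-1) (fun i : ℕ => transferMatrix m A B i)
  rw [← det_one_add_monodromy m n A B hAper hBper, hblock, Matrix.det_fromBlocks_one₁₁, ← key,
    Matrix.det_mul, Matrix.det_mul, hZ, det_Zm, Matrix.det_neg] at h1
  have h2 : G.det * ∏ i : Fin n, (B ((i : ℕ) : ℤ)).det = 1 := by
    have := congrArg Matrix.det hGB
    rw [Matrix.det_mul, hBt, det_bd (fun i : Fin n => (B ((i : ℕ) : ℤ))ᵀ), Matrix.det_one] at this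
    simpa only [Matrix.det_transpose] using this
  simp only [Fintype.card_prod, Fintype.card_fin] at h1
  have h3 : ((-1 : ℝ) ^ (n * m)) * (-1) ^ (n * m) = 1 := by
    rw [← mul_pow]; norm_num
  rw [← h1]
  linear_combination (-(hessianNeg m n A B).det * ((-1 : ℝ) ^ (n * m)) * (-1) ^ (n * m)) * h2
    - (hessianNeg m n A B).det * h3

lemma matIndex_eq_card {N : Type*} [Fintype N] (Q : Matrix N N ℝ) {I : Type*} [Fintype I]
    (e : (N → ℝ) ≃ₗ[ℝ] (I → ℝ)) (w : I → ℝ)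
    (h : ∀ x, x ⬝ᵥ Q *ᵥ x = ∑ i, w i * (e x i) ^ 2) :
    matIndex Q = Nat.card {i // w i < 0} := by
  classical
  unfold matIndex
  apply IsGreatest.csSup_eq
  constructor
  · let ex : ({i // w i < 0} → ℝ) →ₗ[ℝ] (I → ℝ) :=
      { toFun := fun f i => if hi : w i < 0 then f ⟨i, hi⟩ else 0
        map_add' := by intro f g; ext i; by_cases hi : w i < 0 <;> simp [hi]
        map_smul' := by intro f g; ext i; by_cases hi : w i < 0 <;> simp [hi] }
    let g := e.symm.toLinearMap ∘ₗ ex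
    have hex : Function.Injective ex := by
      intro f f' hf
      ext ⟨i, hi⟩
      have := congrFun hf i
      simpa [ex, hi] using this
    have hg : Function.Injective g := e.symm.injective.comp hex
    refine ⟨LinearMap.range g, ?_, ?_⟩
    · rw [LinearMap.finrank_range_of_inj hg, Module.finrank_fintype_fun_eq_card, Nat.card_eq_fintype_card]
    · rintro _ ⟨f, rfl⟩ hx
      rw [h]
      have hge : e (g f) = ex f := by simp [g]
      rw [hge]
      have hf : f ≠ 0 := by rintro rfl; simp at hx
      obtain ⟨⟨i, hi⟩, hfi⟩ := Function.ne_iff.mp hf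
      apply Finset.sum_neg' 
      · intro j _
        by_cases hj : w j < 0
        · exact mul_nonpos_of_nonpos_of_nonneg hj.le (sq_nonneg _)
        · simp [ex, hj]
      · refine ⟨i, Finset.mem_univ _, ?_⟩
        apply mul_neg_of_neg_of_pos hi
        have : ex f i = f ⟨i, hi⟩ := by simp [ex, hi]
        rw [this]
        exact sq_pos_of_ne_zero (by simpa using hfi)
  · rintro d ⟨W, rfl, hW⟩
    let r : (N → ℝ) →ₗ[ℝ] ({i // w i < 0} → ℝ) :=
      (LinearMap.funLeft ℝ ℝ (Subtype.val : {i // w i < 0} → I)) ∘ₗ e.toLinearMap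
    have hr : Function.Injective (r ∘ₗ W.subtype) := by
      rw [← LinearMap.ker_eq_bot, LinearMap.ker_eq_bot']
      rintro ⟨x, hx⟩ hx0
      by_contra hne
      have hne' : x ≠ 0 := fun h => hne (by simp [h])
      have h1 := hW x hx hne'
      rw [h] at h1
      apply absurd h1
      push Not
      apply Finset.sum_nonneg
      intro i _
      by_cases hi : w i < 0
      · have : e x i = 0 := congrFun hx0 ⟨i, hi⟩
        simp [this]
      · exact mul_nonneg (not_lt.mp hi) (sq_nonneg _)
    have := LinearMap.finrank_le_finrank_of_injective hr
    rwa [Module.finrank_fintype_fun_eq_card, ← Nat.card_eq_fintype_card] at this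

lemma exists_diag {N : Type*} [Fintype N] [DecidableEq N] (Q : Matrix N N ℝ) (hQ : Qᵀ = Q) :
    ∃ (e : (N → ℝ) ≃ₗ[ℝ] (N → ℝ)) (w : N → ℝ), Q.det = ∏ i, w i ∧
      ∀ x, x ⬝ᵥ Q *ᵥ x = ∑ i, w i * (e x i) ^ 2 := by
  have hH : Q.IsHermitian := by rw [Matrix.IsHermitian, Matrix.conjTranspose_eq_transpose_of_trivial, hQ]
  let U : Matrix N N ℝ := (hH.eigenvectorUnitary : Matrix N N ℝ)
  have hU : U * star U = 1 := Unitary.coe_mul_star_self _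
  have hU' : star U * U = 1 := Unitary.coe_star_mul_self _
  have hs : star U = Uᵀ := by
    rw [Matrix.star_eq_conjTranspose, Matrix.conjTranspose_eq_transpose_of_trivial]
  rw [hs] at hU hU'
  refine ⟨Matrix.toLin'OfInv hU hU', hH.eigenvalues, ?_, ?_⟩
  · simpa using hH.det_eq_prod_eigenvalues
  · intro x
    have hsp : Q = U * Matrix.diagonal hH.eigenvalues * Uᵀ := by
      have := hH.spectral_theorem
      rw [Unitary.conjStarAlgAut_apply] at this
      rw [← hs]
      exact this
    have e1 : (Matrix.toLin'OfInv hU hU') x = Uᵀ *ᵥ x := rfl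
    rw [e1]
    have e2 : x ⬝ᵥ Q *ᵥ x = (Uᵀ *ᵥ x) ⬝ᵥ (Matrix.diagonal hH.eigenvalues *ᵥ (Uᵀ *ᵥ x)) := by
      conv_lhs => rw [hsp]
      rw [← Matrix.mulVec_mulVec, ← Matrix.mulVec_mulVec, Matrix.dotProduct_mulVec,
        ← Matrix.mulVec_transpose]
    rw [e2]
    simp only [dotProduct, Matrix.mulVec_diagonal]
    apply Finset.sum_congr rfl
    intro i _
    ring

lemma prod_sign {I : Type*} [Fintype I] (w : I → ℝ) (h : ∏ i, w i ≠ 0) :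
    0 < (-1 : ℝ) ^ (Nat.card {i // w i < 0}) * ∏ i, w i := by
  classical
  have : (-1 : ℝ) ^ (Nat.card {i // w i < 0}) = ∏ i, (if w i < 0 then (-1 : ℝ) else 1) := by
    rw [Finset.prod_ite]
    simp [Nat.card_eq_fintype_card, Fintype.card_subtype]
  rw [this, ← Finset.prod_mul_distrib]
  apply Finset.prod_pos
  intro i hi
  have := Finset.prod_ne_zero_iff.mp h i hi
  split_ifs with h1
  · linarith
  · rw [one_mul]; exact lt_of_le_of_ne (not_lt.mp h1) this.symm

lemma sign_det {N : Type*} [Fintype N] [DecidableEq N] (Q : Matrix N N ℝ) (hQ : Qᵀ = Q)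
    (hd : Q.det ≠ 0) : 0 < (-1 : ℝ) ^ (matIndex Q) * Q.det := by
  obtain ⟨e, w, h1, h2⟩ := exists_diag Q hQ
  rw [matIndex_eq_card Q e w h2, h1]
  exact prod_sign w (h1 ▸ hd)

lemma index_add {N M K : Type*} [Fintype N] [Fintype M] [DecidableEq M] [Fintype K] [DecidableEq K]
    (Q : Matrix N N ℝ) (Q₁ : Matrix M M ℝ) (Q₂ : Matrix K K ℝ) (h₁ : Q₁ᵀ = Q₁) (h₂ : Q₂ᵀ = Q₂)
    (e : (N → ℝ) ≃ₗ[ℝ] (M → ℝ) × (K → ℝ))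
    (h : ∀ x, x ⬝ᵥ Q *ᵥ x = 2 * ((e x).1 ⬝ᵥ Q₁ *ᵥ (e x).1 + (e x).2 ⬝ᵥ Q₂ *ᵥ (e x).2)) :
    matIndex Q = matIndex Q₁ + matIndex Q₂ := by
  obtain ⟨e₁, w₁, -, g₁⟩ := exists_diag Q₁ h₁
  obtain ⟨e₂, w₂, -, g₂⟩ := exists_diag Q₂ h₂
  rw [matIndex_eq_card Q₁ e₁ w₁ g₁, matIndex_eq_card Q₂ e₂ w₂ g₂]
  let E := (e.trans (e₁.prodCongr e₂)).trans (LinearEquiv.sumArrowLequivProdArrow M K ℝ ℝ).symm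
  rw [matIndex_eq_card Q E (Sum.elim (fun i => 2 * w₁ i) (fun i => 2 * w₂ i))]
  · rw [← Nat.card_sum]
    apply Nat.card_congr
    refine (Equiv.subtypeSum).trans (Equiv.sumCongr ?_ ?_)
    · exact Equiv.subtypeEquivRight (by intro i; simp only [Sum.elim_inl, Sum.elim_inr]; constructor <;> intro h <;> linarith)
    · exact Equiv.subtypeEquivRight (by intro i; simp only [Sum.elim_inl, Sum.elim_inr]; constructor <;> intro h <;> linarith)
  · intro x
    rw [h, g₁, g₂, Fintype.sum_sum_type]
    simp only [Sum.elim_inl, Sum.elim_inr, mul_add, Finset.mul_sum, ← mul_assoc]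
    rfl

lemma exists_root {k : Type*} [Fintype k] [DecidableEq k] (m : ℕ) (hm : 0 < m)
    (hk : Fintype.card k = m + m) (P : Matrix k k ℝ) (h : (1 + P).det < 0) :
    ∃ ρ : ℝ, ρ < -1 ∧ (P - ρ • 1).det = 0 := by
  have hP : ∀ x : ℝ, ((-P).charpoly).eval x = (P - (-x) • 1).det := by
    intro x
    rw [Matrix.eval_charpoly]
    congr 1
    rw [Matrix.scalar_apply, ← Matrix.smul_one_eq_diagonal, neg_smul]
    abel
  have hne : Nonempty k := Fintype.card_pos_iff.mp (by omega)
  have ht := Polynomial.tendsto_atTop_of_leadingCoeff_nonneg ((-P).charpoly)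
    (by rw [Matrix.charpoly_degree_eq_dim, hk]; exact_mod_cast (by omega : 0 < m + m))
    (by rw [(Matrix.charpoly_monic (-P)).leadingCoeff]; norm_num)
  obtain ⟨b, hb1, hb2⟩ := ((ht.eventually_gt_atTop 0).and (Filter.eventually_gt_atTop 1)).exists
  have h1 : ((-P).charpoly).eval 1 < 0 := by
    rw [hP]
    simpa [add_comm] using h
  obtain ⟨x, hx, hx0⟩ := intermediate_value_Ioo hb2.le ((-P).charpoly.continuous.continuousOn)
    (show (0 : ℝ) ∈ Set.Ioo _ _ from ⟨h1, hb1⟩)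
  refine ⟨-x, by linarith [hx.1], ?_⟩
  rw [← hP]
  exact hx0

lemma hessian_symm (m n : ℕ) [NeZero n] (A B : ℤ → Matrix (Fin m) (Fin m) ℝ)
    (hBper : ∀ i, B (i + n) = B i) (hAsym : ∀ i, (A i)ᵀ = A i) :
    (hessian m n A B)ᵀ = hessian m n A B := by
  have hn : 0 < n := Nat.pos_of_ne_zero (NeZero.ne n)
  ext ⟨i, a⟩ ⟨j, b⟩
  have hA : ∀ i a b, A i a b = A i b a := fun i a b => by
    conv_lhs => rw [← hAsym i]
    rfl
  have e : (i = j - 1) = (j = i + 1) := by rw [eq_sub_iff_add_eq, eq_comm (a := j)]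
  have e' : (i = j + 1) = (j = i - 1) := by rw [eq_sub_iff_add_eq, eq_comm (a := i)]
  have h1 : j = i + 1 → B (((j : ℕ) : ℤ) - 1) = B ((i : ℕ) : ℤ) := by
    rintro rfl
    rw [Fin_add_one_val]
    split_ifs with h
    · rw [← hBper, h]; congr 1; push_cast [Nat.cast_sub hn]; ring
    · congr 1; push_cast; ring
  have h2 : j = i - 1 → B ((j : ℕ) : ℤ) = B (((i : ℕ) : ℤ) - 1) := by
    rintro rfl
    rw [Fin_sub_one_val]
    split_ifs with h
    · rw [← hBper (_ - 1), h]; congr 1; push_cast [Nat.cast_sub hn]; ring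
    · congr 1; push_cast [Nat.cast_sub (show 1 ≤ (i : ℕ) by omega)]; ring
  simp only [Matrix.transpose_apply, hessian, e, e']
  have t1 : (if i = j then A ((j : ℕ) : ℤ) b a else 0) = if j = i then A ((i : ℕ) : ℤ) a b else 0 := by
    by_cases h : i = j
    · subst h; simp [hA _ a b]
    · simp [h, Ne.symm h]
  rw [t1, add_right_comm]
  congr 1
  · congr 1
    split_ifs with h
    · rw [h2 h]
    · rfl
  · split_ifs with h
    · rw [h1 h]
    · rfl

lemma hessianNeg_symm (m n : ℕ) [NeZero n] (A B : ℤ → Matrix (Fin m) (Fin m) ℝ)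
    (hBper : ∀ i, B (i + n) = B i) (hAsym : ∀ i, (A i)ᵀ = A i) :
    (hessianNeg m n A B)ᵀ = hessianNeg m n A B := by
  have hn : 0 < n := Nat.pos_of_ne_zero (NeZero.ne n)
  ext ⟨i, a⟩ ⟨j, b⟩
  have hA : ∀ i a b, A i a b = A i b a := fun i a b => by
    conv_lhs => rw [← hAsym i]
    rfl
  have e : (i = j - 1) = (j = i + 1) := by rw [eq_sub_iff_add_eq, eq_comm (a := j)]
  have e' : (i = j + 1) = (j = i - 1) := by rw [eq_sub_iff_add_eq, eq_comm (a := i)]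
  have h1 : j = i + 1 → B (((j : ℕ) : ℤ) - 1) = B ((i : ℕ) : ℤ) := by
    rintro rfl
    rw [Fin_add_one_val]
    split_ifs with h
    · rw [← hBper, h]; congr 1; push_cast [Nat.cast_sub hn]; ring
    · congr 1; push_cast; ring
  have h2 : j = i - 1 → B ((j : ℕ) : ℤ) = B (((i : ℕ) : ℤ) - 1) := by
    rintro rfl
    rw [Fin_sub_one_val]
    split_ifs with h
    · rw [← hBper (_ - 1), h]; congr 1; push_cast [Nat.cast_sub hn]; ring
    · congr 1; push_cast [Nat.cast_sub (show 1 ≤ (i : ℕ) by omega)]; ring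
  have g1 : j = i + 1 → ((j : ℕ) = 0 ↔ (i : ℕ) = n - 1) := by
    rintro rfl
    rw [Fin_add_one_val]
    split_ifs with h <;> simp [h]
  have g2 : j = i - 1 → ((j : ℕ) = n - 1 ↔ (i : ℕ) = 0) := by
    rintro rfl
    rw [Fin_sub_one_val]
    have := i.isLt
    split_ifs with h
    · simp [h]
    · simp only [h, iff_false]; omega
  simp only [Matrix.transpose_apply, hessianNeg, e, e']
  have t1 : (if i = j then A ((j : ℕ) : ℤ) b a else 0) = if j = i then A ((i : ℕ) : ℤ) a b else 0 := by
    by_cases h : i = j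
    · subst h; simp [hA _ a b]
    · simp [h, Ne.symm h]
  rw [t1, add_right_comm]
  congr 1
  · congr 1
    by_cases h : j = i - 1
    · rw [if_pos h, if_pos h, h2 h]; simp only [g2 h]
    · rw [if_neg h, if_neg h]
  · by_cases h : j = i + 1
    · rw [if_pos h, if_pos h, h1 h]; simp only [g1 h]
    · rw [if_neg h, if_neg h]

/-- lower half / upper half embedding -/
noncomputable def lo {n : ℕ} (i : Fin n) : Fin (2 * n) := ⟨i, by omega⟩
noncomputable def hi {n : ℕ} (i : Fin n) : Fin (2 * n) := ⟨i + n, by omega⟩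

section entries
variable (m n : ℕ) [NeZero n] (A B : ℤ → Matrix (Fin m) (Fin m) ℝ) 

lemma H2_hihi (hAper : ∀ i, A (i + n) = A i) (hBper : ∀ i, B (i + n) = B i) (i j : Fin n) (a b) :
    hessian m (2 * n) A B (hi i, a) (hi j, b) = hessian m (2 * n) A B (lo i, a) (lo j, b) := by
  have hn : 0 < n := Nat.pos_of_ne_zero (NeZero.ne n)
  have hi' := i.isLt
  have hj' := j.isLt
  have c1 : A (((i : ℕ) : ℤ) + n) = A ((i : ℕ) : ℤ) := hAper _
  have c2 : B (((i : ℕ) : ℤ) + n) = B ((i : ℕ) : ℤ) := hBper _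
  have c3 : B (((i : ℕ) : ℤ) + n - 1) = B (((i : ℕ) : ℤ) - 1) := by
    rw [← hBper (((i : ℕ) : ℤ) - 1)]; congr 1; ring
  simp only [hessian, Fin.ext_iff, Fin_sub_one_val, Fin_add_one_val, hi, lo, Nat.cast_add, c1, c2, c3]
  congr 1
  · congr 1
    · exact if_congr (by omega) rfl rfl
    · exact if_congr (by split_ifs <;> omega) rfl rfl
  · exact if_congr (by split_ifs <;> omega) rfl rfl

lemma H2_hilo (hAper : ∀ i, A (i + n) = A i) (hBper : ∀ i, B (i + n) = B i) (i j : Fin n) (a b) :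
    hessian m (2 * n) A B (hi i, a) (lo j, b) = hessian m (2 * n) A B (lo i, a) (hi j, b) := by
  have hn : 0 < n := Nat.pos_of_ne_zero (NeZero.ne n)
  have hi' := i.isLt
  have hj' := j.isLt
  have c1 : A (((i : ℕ) : ℤ) + n) = A ((i : ℕ) : ℤ) := hAper _
  have c2 : B (((i : ℕ) : ℤ) + n) = B ((i : ℕ) : ℤ) := hBper _
  have c3 : B (((i : ℕ) : ℤ) + n - 1) = B (((i : ℕ) : ℤ) - 1) := by
    rw [← hBper (((i : ℕ) : ℤ) - 1)]; congr 1; ring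
  simp only [hessian, Fin.ext_iff, Fin_sub_one_val, Fin_add_one_val, hi, lo, Nat.cast_add, c1, c2, c3]
  congr 1
  · congr 1
    · exact if_congr (by omega) rfl rfl
    · exact if_congr (by split_ifs <;> omega) rfl rfl
  · exact if_congr (by split_ifs <;> omega) rfl rfl

lemma H2_add (i j : Fin n) (a b) :
    hessian m (2 * n) A B (lo i, a) (lo j, b) + hessian m (2 * n) A B (lo i, a) (hi j, b)
      = hessian m n A B (i, a) (j, b) := by
  have hn : 0 < n := Nat.pos_of_ne_zero (NeZero.ne n)
  have hi' := i.isLt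
  have hj' := j.isLt
  simp only [hessian, Fin.ext_iff, Fin_sub_one_val, Fin_add_one_val, hi, lo]
  have s : ∀ (p q r : Prop) [Decidable p] [Decidable q] [Decidable r] (x : ℝ), (p ↔ (q ∨ r)) → ¬ (q ∧ r) →
      (if q then x else 0) + (if r then x else 0) = if p then x else 0 := by
    intro p q r _ _ _ x h1 h2
    by_cases hq : q <;> by_cases hr : r <;> simp_all
  rw [if_neg (show ¬ ((j : ℕ) + n = i) by omega)]
  rw [← s ((j : ℕ) = if (i : ℕ) = 0 then n - 1 else i - 1) ((j : ℕ) = if (i : ℕ) = 0 then 2 * n - 1 else i - 1)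
    ((j : ℕ) + n = if (i : ℕ) = 0 then 2 * n - 1 else i - 1) _ (by split_ifs <;> omega) (by split_ifs <;> omega)]
  rw [← s ((j : ℕ) = if (i : ℕ) = n - 1 then 0 else (i : ℕ) + 1) ((j : ℕ) = if (i : ℕ) = 2 * n - 1 then 0 else (i : ℕ) + 1)
    ((j : ℕ) + n = if (i : ℕ) = 2 * n - 1 then 0 else (i : ℕ) + 1) _ (by split_ifs <;> omega) (by split_ifs <;> omega)]
  ring

lemma H2_sub (i j : Fin n) (a b) :
    hessian m (2 * n) A B (lo i, a) (lo j, b) - hessian m (2 * n) A B (lo i, a) (hi j, b)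
      = hessianNeg m n A B (i, a) (j, b) := by
  have hn : 0 < n := Nat.pos_of_ne_zero (NeZero.ne n)
  have hi' := i.isLt
  have hj' := j.isLt
  simp only [hessian, hessianNeg, Fin.ext_iff, Fin_sub_one_val, Fin_add_one_val, hi, lo]
  have s : ∀ (p q r c : Prop) [Decidable p] [Decidable q] [Decidable r] [Decidable c] (x : ℝ), (p ↔ (q ∨ r)) → ¬ (q ∧ r) →
      (p → (c ↔ r)) →
      (if q then -x else 0) - (if r then -x else 0) = if p then -((if c then (-1 : ℝ) else 1) * x) else 0 := by
    intro p q r c _ _ _ _ x h1 h2 h3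
    by_cases hq : q <;> by_cases hr : r <;> simp_all
  rw [← s ((j : ℕ) = if (i : ℕ) = 0 then n - 1 else i - 1) ((j : ℕ) = if (i : ℕ) = 0 then 2 * n - 1 else i - 1)
    ((j : ℕ) + n = if (i : ℕ) = 0 then 2 * n - 1 else i - 1) _ _ (by split_ifs <;> omega) (by split_ifs <;> omega)
    (by split_ifs <;> omega)]
  rw [← s ((j : ℕ) = if (i : ℕ) = n - 1 then 0 else (i : ℕ) + 1) ((j : ℕ) = if (i : ℕ) = 2 * n - 1 then 0 else (i : ℕ) + 1)
    ((j : ℕ) + n = if (i : ℕ) = 2 * n - 1 then 0 else (i : ℕ) + 1) _ _ (by split_ifs <;> omega) (by split_ifs <;> omega)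
    (by split_ifs <;> omega)]
  rw [if_neg (show ¬ ((j : ℕ) + n = i) by omega)]
  ring

end entries

lemma sum_halves {n : ℕ} (f : Fin (2 * n) → ℝ) :
    ∑ i, f i = ∑ i : Fin n, f (lo i) + ∑ i : Fin n, f (hi i) := by
  have h : n + n = 2 * n := by ring
  rw [← (finCongr h).sum_comp, Fin.sum_univ_add]
  congr 1
  apply Finset.sum_congr rfl
  intro i _
  congr 1
  ext
  simp [hi, add_comm]

noncomputable def halves (m n : ℕ) : (Fin (2 * n) × Fin m → ℝ) ≃ₗ[ℝ] (Fin n × Fin m → ℝ) × (Fin n × Fin m → ℝ) where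
  toFun u := (fun p => (u (lo p.1, p.2) + u (hi p.1, p.2)) / 2,
    fun p => (u (lo p.1, p.2) - u (hi p.1, p.2)) / 2)
  invFun v := fun p => if h : (p.1 : ℕ) < n then v.1 (⟨p.1, h⟩, p.2) + v.2 (⟨p.1, h⟩, p.2)
    else v.1 (⟨p.1 - n, by omega⟩, p.2) - v.2 (⟨p.1 - n, by omega⟩, p.2)
  map_add' u v := by ext p <;> simp <;> ring
  map_smul' c v := by ext p <;> simp <;> ring
  left_inv u := by
    ext ⟨i, a⟩
    by_cases h : (i : ℕ) < n
    · simp only [h, dite_true, lo, hi]; ring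
    · have : (i : ℕ) - n + n = i := by omega
      simp only [h, dite_false, lo, hi, this]; ring
  right_inv v := by
    ext ⟨i, a⟩ <;> simp [lo, hi]

lemma quad_halves (m n : ℕ) [NeZero n] (A B : ℤ → Matrix (Fin m) (Fin m) ℝ)
    (hAper : ∀ i, A (i + n) = A i) (hBper : ∀ i, B (i + n) = B i) (x : Fin (2 * n) × Fin m → ℝ) :
    x ⬝ᵥ hessian m (2 * n) A B *ᵥ x =
      2 * ((halves m n x).1 ⬝ᵥ hessian m n A B *ᵥ (halves m n x).1
        + (halves m n x).2 ⬝ᵥ hessianNeg m n A B *ᵥ (halves m n x).2) := by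
  have hq : ∀ {ι : Type} [Fintype ι] (Q : Matrix ι ι ℝ) (v : ι → ℝ),
      v ⬝ᵥ Q *ᵥ v = ∑ p, ∑ q, v p * Q p q * v q := by
    intro ι _ Q v
    simp [dotProduct, Matrix.mulVec, Finset.mul_sum, mul_assoc]
  have hs : ∀ f : Fin (2 * n) × Fin m → ℝ, ∑ p, f p =
      ∑ p : Fin n × Fin m, (f (lo p.1, p.2) + f (hi p.1, p.2)) := by
    intro f
    rw [Fintype.sum_prod_type, sum_halves, ← Finset.sum_add_distrib, Fintype.sum_prod_type]
    simp [Finset.sum_add_distrib]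
  rw [hq, hq, hq, hs, ← Finset.sum_add_distrib, Finset.mul_sum]
  apply Finset.sum_congr rfl
  intro p _
  rw [hs, hs, ← Finset.sum_add_distrib, ← Finset.sum_add_distrib, Finset.mul_sum]
  apply Finset.sum_congr rfl
  intro q _
  rw [H2_hihi m n A B hAper hBper, H2_hilo m n A B hAper hBper]
  have h1 := H2_add m n A B p.1 q.1 p.2 q.2
  have h2 := H2_sub m n A B p.1 q.1 p.2 q.2
  simp only [Prod.mk.eta] at h1 h2
  rw [← h1, ← h2]
  simp only [halves, LinearEquiv.coe_mk, LinearMap.coe_mk, AddHom.coe_mk]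
  ring

/-- The index of the doubled system splits as `ind H⁽²⁾ = ind H + ind H₋₁`;
consequently if `H₋₁` is invertible and `σ · (-1)^{ind H⁽²⁾ - ind H} < 0`
then the monodromy matrix has a real eigenvalue `ρ < -1`. -/
theorem doubled_index_and_instability (m n : ℕ) (hm : 0 < m) [NeZero n]
    (A B : ℤ → Matrix (Fin m) (Fin m) ℝ)
    (hAper : ∀ i, A (i + n) = A i) (hBper : ∀ i, B (i + n) = B i)
    (hAsym : ∀ i, (A i)ᵀ = A i) (hBinv : ∀ i, IsUnit (B i).det) :
    matIndex (hessian m (2 * n) A B)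
      = matIndex (hessian m n A B) + matIndex (hessianNeg m n A B) ∧
    (IsUnit (hessianNeg m n A B).det →
      Real.sign (∏ i : Fin n, (B ((i : ℕ) : ℤ)).det) *
        (-1 : ℝ) ^ (matIndex (hessian m (2 * n) A B) - matIndex (hessian m n A B)) < 0 →
      ∃ ρ : ℝ, ρ < -1 ∧ (monodromy m n A B - ρ • 1).det = 0) := by
  have hadd := index_add (hessian m (2 * n) A B) (hessian m n A B) (hessianNeg m n A B)
    (hessian_symm m n A B hBper hAsym) (hessianNeg_symm m n A B hBper hAsym) (halves m n)
    (quad_halves m n A B hAper hBper)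
  refine ⟨hadd, ?_⟩
  intro hunit hsign
  rw [hadd, Nat.add_sub_cancel_left] at hsign
  apply exists_root m hm (by simp)
  have hs := sign_det _ (hessianNeg_symm m n A B hBper hAsym) hunit.ne_zero
  rw [det_hessNeg m n A B hAper hBper hBinv] at hs
  set b := ∏ i : Fin n, (B ((i : ℕ) : ℤ)).det
  set d := (1 + monodromy m n A B).det
  rcases neg_one_pow_eq_or ℝ (matIndex (hessianNeg m n A B)) with h | h <;> rw [h] at hs hsign
  · rcases lt_trichotomy b 0 with hb | hb | hb
    · nlinarith
    · simp [hb] at hs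
    · rw [Real.sign_of_pos hb] at hsign; norm_num at hsign
  · rcases lt_trichotomy b 0 with hb | hb | hb
    · rw [Real.sign_of_neg hb] at hsign; norm_num at hsign
    · simp [hb] at hs
    · nlinarith
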